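/- arXiv:1604.05020 — 2 statements merged into one kernel-verified Lean document; each statement's English description precedes it below -/
import Mathlib

section
/- Let k ≥ 2 be an even integer and let G be a finite simple graph with n vertices, m edges, and maximum degree at most k. If no connected component of G is a k-regular graph, then the matching number satisfies α'(G) ≥ ((k+2)/(k²+k+2))·m − ((k−2)/(k²+k+2))·n. -/
/-!
The proof combines the Tutte–Berge structure of maximum matchings with a local count.

A matching of `H` is encoded as an involution `f` of the vertex set moving each non-fixed vertex to
a neighbour; the unmatched vertices are the fixed points and the number of moved vertices is twice
the number of edges of the matching. The bound is proved in the sharper form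
`(k + 2) * ∑ deg v ≤ 2 * (k - 2) * #{v | 0 < deg v} + (k² + k + 2) * #{v | f v ≠ v}`
(`exists_matching_bound`), by induction on the number of non-isolated vertices.

* If some non-isolated vertex `v` is covered by every maximum matching, delete its incident edges.
  The degree sum drops by at most `2k`, the number of non-isolated vertices drops by at least one,
  and the maximum number of matched vertices drops by at least two (parity); this balances because
  `2 * k * (k + 2) = 2 * (k - 2) + 2 * (k² + k + 2)`.
* Otherwise every vertex is missed by some maximum matching, and Gallai's lemma
  (`missed_eq_of_reachable`) says that a maximum matching misses at most one vertex of each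
  component. In a component with `c` vertices all degrees are at most `c - 1`, and since the
  component is not `k`-regular and `k` is even, the degree sum is at most `k * c - 2`. The bound
  then holds on every component (`component_arith`).
-/

/-- The matching number of a simple graph: the maximum number of edges in a matching. -/
noncomputable def matchingNumber {V : Type*} (G : SimpleGraph V) : ℕ :=
  sSup {n | ∃ M : G.Subgraph, M.IsMatching ∧ M.edgeSet.ncard = n}

section

open Finset

/-! ### Matchings as involutions -/

/-- A matching of `H`, encoded as the involution swapping the two ends of every matching edge and
fixing the unmatched vertices. -/
structure IsMatchInv {V : Type*} (H : SimpleGraph V) (f : V → V) : Prop where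
  invol : ∀ v, f (f v) = v
  adj : ∀ v, f v ≠ v → H.Adj v (f v)

/-- The graph whose edges are the 2-cycles of an involution. -/
def involGraph {V : Type*} (f : V → V) (hf : ∀ v, f (f v) = v) : SimpleGraph V where
  Adj u w := u ≠ w ∧ f u = w
  symm := ⟨fun u w h => ⟨h.1.symm, by rw [← h.2, hf]⟩⟩
  loopless := ⟨fun _ h => h.1 rfl⟩

/-- `H` with all edges at `v` removed; `v` stays as an isolated vertex. -/
def isolate {V : Type*} (H : SimpleGraph V) (v : V) : SimpleGraph V where
  Adj a b := H.Adj a b ∧ a ≠ v ∧ b ≠ v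
  symm := ⟨fun _ _ h => ⟨h.1.symm, h.2.2, h.2.1⟩⟩
  loopless := ⟨fun _ h => h.1.ne rfl⟩

open Classical in
/-- The set of vertices covered by the matching `f`. -/
noncomputable def moved {V : Type*} [Fintype V] (f : V → V) : Finset V :=
  univ.filter fun v => f v ≠ v

/-- `f` is a maximum matching of `H`. -/
structure IsMaxInv {V : Type*} [Fintype V] (H : SimpleGraph V) (f : V → V) : Prop where
  isMatch : IsMatchInv H f
  max : ∀ g, IsMatchInv H g → (moved g).card ≤ (moved f).card

variable {V : Type*} [Fintype V]

lemma mem_moved {f : V → V} {v : V} : v ∈ moved f ↔ f v ≠ v := by simp [moved]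

open Classical in
lemma card_moved_eq (f : V → V) (hf : ∀ v, f (f v) = v) :
    (moved f).card = 2 * (involGraph f hf).edgeFinset.card := by
  rw [← SimpleGraph.sum_degrees_eq_twice_card_edges, moved, Finset.card_filter]
  refine Finset.sum_congr rfl fun v _ => ?_
  rw [← SimpleGraph.card_neighborFinset_eq_degree]
  split_ifs with h
  · symm
    rw [Finset.card_eq_one]
    refine ⟨f v, ?_⟩
    ext w
    rw [SimpleGraph.mem_neighborFinset, Finset.mem_singleton]
    exact ⟨fun hw => hw.2.symm, fun hw => ⟨by rw [hw]; exact h.symm, hw.symm⟩⟩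
  · symm
    rw [Finset.card_eq_zero]
    ext w
    rw [SimpleGraph.mem_neighborFinset]
    simp only [Finset.notMem_empty, iff_false]
    rintro ⟨h1, h2⟩
    exact h fun h3 => h1 (h3.symm.trans h2)

open Classical in
lemma card_moved_le_matchingNumber {G : SimpleGraph V} {f : V → V} (hf : IsMatchInv G f) :
    (moved f).card ≤ 2 * matchingNumber G := by
  rw [card_moved_eq f hf.invol]
  refine Nat.mul_le_mul_left 2 ?_
  have hbdd : BddAbove {n | ∃ M : G.Subgraph, M.IsMatching ∧ M.edgeSet.ncard = n} := by
    refine ⟨G.edgeSet.ncard, ?_⟩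
    rintro n ⟨M, -, rfl⟩
    exact Set.ncard_le_ncard M.edgeSet_subset (Set.toFinite _)
  let M : G.Subgraph :=
    { verts := {v | f v ≠ v}
      Adj := fun u w => u ≠ w ∧ f u = w
      adj_sub := by
        rintro u w ⟨h1, rfl⟩
        exact hf.adj u h1.symm
      edge_vert := by
        rintro u w ⟨h1, rfl⟩
        exact h1.symm
      symm := ⟨fun u w h => (involGraph f hf.invol).adj_symm h⟩ }
  refine le_csSup hbdd ⟨M, ?_, ?_⟩
  · intro v hv
    exact ⟨f v, ⟨Ne.symm hv, rfl⟩, fun w hw => hw.2.symm⟩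
  · rw [← Set.ncard_coe_finset, SimpleGraph.coe_edgeFinset]
    congr 1

open Classical in
lemma exists_maxInv (H : SimpleGraph V) : ∃ f, IsMaxInv H f := by
  obtain ⟨f, hf, hmax⟩ := Finset.exists_max_image
    (univ.filter fun f : V → V => IsMatchInv H f) (fun f => (moved f).card)
    ⟨id, by simpa using ⟨fun _ => rfl, fun _ h => (h rfl).elim⟩⟩
  exact ⟨f, (Finset.mem_filter.1 hf).2, fun g hg => hmax g (by simpa using hg)⟩

/-- A maximum matching leaves no edge with both ends unmatched. -/
lemma IsMaxInv.not_adj {H : SimpleGraph V} {f : V → V} (hf : IsMaxInv H f) {x y : V}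
    (hx : f x = x) (hy : f y = y) : ¬ H.Adj x y := by
  classical
  intro hxy
  have hne := hxy.ne
  let g : V → V := fun a => if a = x then y else if a = y then x else f a
  have hi := hf.isMatch.invol
  have hg : IsMatchInv H g := by
    refine ⟨fun v => ?_, fun v => ?_⟩
    · have := hi v
      grind
    · have h1 := hf.isMatch.adj v
      have h2 := hxy.symm
      grind
  have h := hf.max g hg
  have hlt : (moved f).card < (moved g).card := by
    apply Finset.card_lt_card
    rw [Finset.ssubset_iff_of_subset]
    · exact ⟨x, by rw [mem_moved]; grind, by rw [mem_moved]; grind⟩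
    · intro a
      simp only [mem_moved]
      grind
  omega

/-! ### Gallai's lemma -/

/-- The transitivity step of Gallai's lemma. Among the maximum matchings missing `w`, take the one
agreeing with `f` on the most vertices; exchanging one edge would increase the agreement. -/
lemma gallai_trans {H : SimpleGraph V} (hmiss : ∀ v, ∃ f, IsMaxInv H f ∧ f v = v) {u w v : V}
    (huw : ∀ f, IsMaxInv H f → f u = u → f w = w → u = w)
    (hwv : ∀ f, IsMaxInv H f → f w = w → f v = v → w = v) :
    ∀ f, IsMaxInv H f → f u = u → f v = v → u = v := by
  classical
  intro f hf hfu hfv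
  by_contra huv
  by_cases hw1 : u = w
  · subst hw1; exact huv (hwv f hf hfu hfv)
  by_cases hw2 : w = v
  · subst hw2; exact huv (huw f hf hfu hfv)
  let agree : (V → V) → ℕ := fun N => (univ.filter fun a => f a = N a ∧ f a ≠ a).card
  obtain ⟨N, hN, hNmax⟩ := Finset.exists_max_image
    (univ.filter fun N : V → V => IsMaxInv H N ∧ N w = w) agree
    (by obtain ⟨g, hg⟩ := hmiss w; exact ⟨g, by simpa using hg⟩)
  simp only [Finset.mem_filter, Finset.mem_univ, true_and] at hN hNmax
  obtain ⟨hN, hNw⟩ := hN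
  have hNu : N u ≠ u := fun h => hw1 (huw N hN h hNw)
  have hNv : N v ≠ v := fun h => hw2 (hwv N hN hNw h)
  have hcard : (moved f).card = (moved N).card :=
    le_antisymm (hN.max f hf.isMatch) (hf.max N hN.isMatch)
  -- `u` and `v` are covered by `N` only, so at least two vertices are covered by `f` only.
  obtain ⟨x, hx, hxw⟩ : ∃ x ∈ moved f \ moved N, x ≠ w := by
    have h2 : 2 ≤ (moved N \ moved f).card := by
      rw [← Finset.card_pair huv]
      apply Finset.card_le_card
      intro a
      simp only [Finset.mem_insert, Finset.mem_singleton, Finset.mem_sdiff, mem_moved]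
      rintro (rfl | rfl)
      · exact ⟨hNu, by simp [hfu]⟩
      · exact ⟨hNv, by simp [hfv]⟩
    rw [← Finset.card_sdiff_comm hcard] at h2
    exact Finset.exists_mem_ne (by omega) w
  simp only [Finset.mem_sdiff, mem_moved, not_not] at hx
  obtain ⟨hfx, hNx⟩ := hx
  have hadj := hf.isMatch.adj x hfx
  have hfi := hf.isMatch.invol
  have hNi := hN.isMatch.invol
  obtain ⟨y, hy⟩ : ∃ y, y = f x := ⟨_, rfl⟩
  rw [← hy] at hadj hfx
  have hNy : N y ≠ y := fun h => hN.not_adj hNx h hadj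
  obtain ⟨z, hz⟩ : ∃ z, z = N y := ⟨_, rfl⟩
  have hfy : f y = x := by rw [hy, hfi]
  have hNz : N z = y := by rw [hz, hNi]
  have hzx : z ≠ x := by grind
  have hzy : z ≠ y := by grind
  let N' : V → V := fun a => if a = x then y else if a = y then x else if a = z then z else N a
  have hN'm : IsMatchInv H N' := by
    refine ⟨fun a => ?_, fun a => ?_⟩
    · have := hNi a
      grind
    · have h1 := hN.isMatch.adj a
      have h2 := hadj.symm
      grind
  have hN'c : (moved N').card = (moved N).card := by
    have : moved N' = insert x ((moved N).erase z) := by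
      ext a
      simp only [Finset.mem_insert, Finset.mem_erase, mem_moved]
      grind
    rw [this, Finset.card_insert_of_notMem, Finset.card_erase_add_one]
    · rw [mem_moved]; grind
    · simp [mem_moved, hNx]
  have hN'w : N' w = w := by grind
  have hle := hNmax N' ⟨⟨hN'm, fun g hg => hN'c ▸ hN.max g hg⟩, hN'w⟩
  have hlt : agree N < agree N' := by
    apply Finset.card_lt_card
    rw [Finset.ssubset_iff_of_subset]
    · refine ⟨x, ?_, ?_⟩ <;> simp only [Finset.mem_filter, Finset.mem_univ, true_and] <;> grind
    · intro a
      simp only [Finset.mem_filter, Finset.mem_univ, true_and]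
      have := hfi a
      grind
  omega

/-- Gallai's lemma: if every vertex is missed by some maximum matching, then a maximum matching
misses at most one vertex of each connected component. -/
lemma missed_eq_of_reachable {H : SimpleGraph V} (hmiss : ∀ v, ∃ f, IsMaxInv H f ∧ f v = v)
    {u v : V} (huv : H.Reachable u v) :
    ∀ f, IsMaxInv H f → f u = u → f v = v → u = v := by
  rw [SimpleGraph.reachable_iff_reflTransGen] at huv
  induction huv with
  | refl => intros; rfl
  | tail _ hbc ih =>
    exact gallai_trans hmiss ih fun f hf hb hc => (hf.not_adj hb hc hbc).elim

/-! ### The bound on one component -/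

/-- The bound on a single component: `c` vertices, degree sum `s`, at least `p ≥ c - 1` matched
vertices. -/
lemma component_arith {k c s p : ℤ} (hk : 2 ≤ k) (hc : 1 ≤ c) (h1 : s ≤ c * (c - 1))
    (h2 : s ≤ k * c - 2) (hp : c - 1 ≤ p) :
    (k + 2) * s ≤ 2 * (k - 2) * c + (k ^ 2 + k + 2) * p := by
  have hp' : (k ^ 2 + k + 2) * (c - 1) ≤ (k ^ 2 + k + 2) * p :=
    mul_le_mul_of_nonneg_left hp (by positivity)
  rcases le_or_gt c k with h | h
  · have h3 : (k + 2) * s ≤ (k + 2) * (c * (c - 1)) := mul_le_mul_of_nonneg_left h1 (by omega)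
    rcases eq_or_lt_of_le h with rfl | h
    · nlinarith
    · have : (k + 2) * c ≤ (k + 2) * (k - 1) := mul_le_mul_of_nonneg_left (by omega) (by omega)
      have := mul_le_mul_of_nonneg_right this (show 0 ≤ c - 1 by omega)
      nlinarith [mul_nonneg (show 0 ≤ k - 2 by omega) (show 0 ≤ c by omega)]
  · have h3 : (k + 2) * s ≤ (k + 2) * (k * c - 2) := mul_le_mul_of_nonneg_left h2 (by omega)
    nlinarith [mul_nonneg (show 0 ≤ k - 2 by omega) (show 0 ≤ c - (k + 1) by omega)]

open Classical in
/-- The handshake lemma on a single component. -/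
lemma even_sum_degree_component (H : SimpleGraph V) (C : H.ConnectedComponent) :
    Even (∑ v with H.connectedComponentMk v = C, H.degree v) := by
  let K : SimpleGraph V :=
    { Adj := fun a b => H.Adj a b ∧ H.connectedComponentMk a = C
      symm := ⟨fun a b h => ⟨h.1.symm, by
        rw [← h.2]
        exact (SimpleGraph.ConnectedComponent.connectedComponentMk_eq_of_adj h.1).symm⟩⟩
      loopless := ⟨fun _ h => h.1.ne rfl⟩ }
  have h : ∑ v with H.connectedComponentMk v = C, H.degree v = ∑ v, K.degree v := by
    rw [Finset.sum_filter]
    refine Finset.sum_congr rfl fun v _ => ?_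
    simp only [← SimpleGraph.card_neighborFinset_eq_degree]
    split_ifs with hv
    · congr 1
      ext w
      simp [K, hv]
    · symm
      rw [Finset.card_eq_zero]
      ext w
      simp [K, hv]
  rw [h, SimpleGraph.sum_degrees_eq_twice_card_edges]
  exact even_two_mul _

open Classical in
/-- The bound on one component, for an `f` that fixes at most one vertex of each component. -/
lemma component_bound {k : ℕ} (hk2 : 2 ≤ k) (hk : Even k) {H : SimpleGraph V}
    (hdeg : ∀ v, H.degree v ≤ k)
    (hnoreg : ∀ A : Set V, A.Nonempty → (∀ a ∈ A, ∀ b, H.Adj a b → b ∈ A) →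
      ∃ a ∈ A, H.degree a < k)
    {f : V → V}
    (hf : ∀ u v, H.Reachable u v → f u = u → f v = v → u = v) (C : H.ConnectedComponent) :
    ∑ v with H.connectedComponentMk v = C, ((k : ℤ) + 2) * (H.degree v : ℤ) ≤
      ∑ v with H.connectedComponentMk v = C, (2 * ((k : ℤ) - 2) * (if 0 < H.degree v then 1 else 0)
        + ((k : ℤ) ^ 2 + k + 2) * (if f v ≠ v then 1 else 0)) := by
  by_cases hiso : ∃ v, H.connectedComponentMk v = C ∧ H.degree v = 0
    -- The component is an isolated vertex, and the left-hand side vanishes.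
  · obtain ⟨v, hv, hd⟩ := hiso
    have hall : ∀ u, H.connectedComponentMk u = C → u = v := by
      intro u hu
      rw [← hv, SimpleGraph.ConnectedComponent.eq] at hu
      obtain ⟨p⟩ := hu.symm
      cases p with
      | nil => rfl
      | cons h _ =>
        have := (H.degree_pos_iff_exists_adj v).2 ⟨_, h⟩
        omega
    refine Finset.sum_le_sum fun u hu => ?_
    obtain rfl := hall u (Finset.mem_filter.1 hu).2
    rw [hd]
    have : (0 : ℤ) ≤ (if f u ≠ u then 1 else 0) := by split_ifs <;> simp
    simp only [Nat.cast_zero, mul_zero, lt_irrefl, if_false, zero_add]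
    positivity
  · push Not at hiso
    set T : Finset V := univ.filter fun v => H.connectedComponentMk v = C with hT
    have hTmem : ∀ v, v ∈ T ↔ H.connectedComponentMk v = C := fun v => by simp [hT]
    have hclosed : ∀ a ∈ T, ∀ b, H.Adj a b → b ∈ T := by
      intro a ha b hab
      rw [hTmem] at *
      rw [← ha]
      exact (SimpleGraph.ConnectedComponent.connectedComponentMk_eq_of_adj hab).symm
    have hne : T.Nonempty := by
      obtain ⟨v, hv⟩ := C.exists_rep
      exact ⟨v, (hTmem v).2 hv⟩
    have hpos : ∑ v ∈ T, (if 0 < H.degree v then (1 : ℤ) else 0) = T.card := by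
      rw [Finset.sum_congr rfl (g := fun _ => (1 : ℤ))]
      · simp
      · intro v hv
        have := hiso v ((hTmem v).1 hv)
        rw [if_pos (by omega)]
    have hmv : (T.card : ℤ) - 1 ≤ ∑ v ∈ T, (if f v ≠ v then (1 : ℤ) else 0) := by
      rw [← Finset.sum_filter, Finset.sum_const, nsmul_eq_mul, mul_one]
      have h1 := Finset.card_filter_add_card_filter_not (s := T) (fun v => f v ≠ v)
      have h2 : (T.filter fun v => ¬ f v ≠ v).card ≤ 1 := by
        rw [Finset.card_le_one]
        intro a ha b hb
        simp only [Finset.mem_filter, not_not, hTmem] at ha hb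
        refine hf a b ?_ ha.2 hb.2
        rw [← SimpleGraph.ConnectedComponent.eq, ha.1, hb.1]
      omega
    have hd1 : ∑ v ∈ T, H.degree v ≤ T.card * (T.card - 1) := by
      rw [← smul_eq_mul]
      refine Finset.sum_le_card_nsmul _ _ _ fun v hv => ?_
      rw [← Finset.card_erase_of_mem hv, ← SimpleGraph.card_neighborFinset_eq_degree]
      refine Finset.card_le_card fun w hw => ?_
      rw [SimpleGraph.mem_neighborFinset] at hw
      exact Finset.mem_erase.2 ⟨hw.ne', hclosed v hv w hw⟩
    have hd2 : ∑ v ∈ T, H.degree v + 2 ≤ k * T.card := by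
      obtain ⟨a, ha, hak⟩ := hnoreg (T : Set V) hne (fun a ha b hab => hclosed a ha b hab)
      have hlt : ∑ v ∈ T, H.degree v < ∑ v ∈ T, k :=
        Finset.sum_lt_sum (fun v _ => hdeg v) ⟨a, ha, hak⟩
      rw [Finset.sum_const, smul_eq_mul, mul_comm] at hlt
      obtain ⟨r, hr⟩ := even_sum_degree_component H C
      obtain ⟨q, hq⟩ := hk.mul_right T.card
      rw [← hT] at hr
      omega
    rw [Finset.sum_add_distrib, ← Finset.mul_sum, ← Finset.mul_sum, ← Finset.mul_sum, hpos]
    have hc := hne.card_pos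
    refine component_arith (by omega) (by omega) ?_ ?_ hmv
    · have : ((∑ v ∈ T, H.degree v : ℕ) : ℤ) ≤ ((T.card * (T.card - 1) : ℕ) : ℤ) := by
        exact_mod_cast hd1
      rw [Nat.cast_mul, Nat.cast_sub (by omega : 1 ≤ T.card)] at this
      simpa using this
    · have : ((∑ v ∈ T, H.degree v + 2 : ℕ) : ℤ) ≤ ((k * T.card : ℕ) : ℤ) := by
        exact_mod_cast hd2
      push_cast at this
      linarith

/-! ### The global bound -/

open Classical in
/-- The absence of `k`-regular components is stated through adjacency-closed sets, a form that
passes easily to `isolate H v`. -/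
theorem exists_matching_bound {k : ℕ} (hk2 : 2 ≤ k) (hk : Even k) (H : SimpleGraph V)
    (hdeg : ∀ v, H.degree v ≤ k)
    (hnoreg : ∀ A : Set V, A.Nonempty → (∀ a ∈ A, ∀ b, H.Adj a b → b ∈ A) →
      ∃ a ∈ A, H.degree a < k) :
    ∃ f, IsMatchInv H f ∧ ((k : ℤ) + 2) * ∑ v, (H.degree v : ℤ) ≤
      2 * ((k : ℤ) - 2) * (univ.filter fun v => 0 < H.degree v).card
        + ((k : ℤ) ^ 2 + k + 2) * (moved f).card := by
  induction hn : (univ.filter fun v => 0 < H.degree v).card using Nat.strong_induction_on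
    generalizing H with
  | _ n ih =>
  by_cases hmiss : ∀ v, ∃ f, IsMaxInv H f ∧ f v = v
  · obtain ⟨f, hf⟩ := exists_maxInv H
    refine ⟨f, hf.isMatch, ?_⟩
    have h := Finset.sum_le_sum fun C (_ : C ∈ (univ : Finset H.ConnectedComponent)) =>
      component_bound hk2 hk hdeg hnoreg
        (fun u v huv => missed_eq_of_reachable hmiss huv f hf) C
    have hfib : ∀ F : V → ℤ, ∑ C : H.ConnectedComponent,
        ∑ v with H.connectedComponentMk v = C, F v = ∑ v, F v := fun F => by
      convert Finset.sum_fiberwise univ H.connectedComponentMk F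
    rw [hfib, hfib, Finset.sum_add_distrib, ← Finset.mul_sum,
      ← Finset.mul_sum, ← Finset.mul_sum, ← Finset.sum_filter, ← Finset.sum_filter] at h
    simp only [Finset.sum_const, nsmul_eq_mul, mul_one] at h
    rw [hn] at h
    exact h
  · push Not at hmiss
    obtain ⟨v, hv⟩ := hmiss
    obtain ⟨f, hf⟩ := exists_maxInv H
    have hvpos : 0 < H.degree v :=
      (H.degree_pos_iff_exists_adj v).2 ⟨f v, hf.isMatch.adj v (hv f hf)⟩
    have hle : ∀ a, (isolate H v).degree a ≤ H.degree a := by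
      intro a
      simp only [← SimpleGraph.card_neighborFinset_eq_degree]
      refine Finset.card_le_card fun w hw => ?_
      rw [SimpleGraph.mem_neighborFinset] at *
      exact hw.1
    have hv0 : (isolate H v).degree v = 0 := by
      rw [← SimpleGraph.card_neighborFinset_eq_degree, Finset.card_eq_zero]
      ext w
      rw [SimpleGraph.mem_neighborFinset]
      simp only [Finset.notMem_empty, iff_false]
      exact fun h => h.2.1 rfl
    have hlt : (univ.filter fun a => 0 < (isolate H v).degree a).card < n := by
      rw [← hn]
      apply Finset.card_lt_card
      rw [Finset.ssubset_iff_of_subset]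
      · exact ⟨v, by simpa using hvpos, by simp [hv0]⟩
      · intro a
        simp only [Finset.mem_filter, Finset.mem_univ, true_and]
        intro h
        exact h.trans_le (hle a)
    obtain ⟨g, hg, hgb⟩ := ih _ hlt (isolate H v) (fun a => (hle a).trans (hdeg a)) (by
      intro A hA hcl
      by_contra! hreg
      have hvA : v ∉ A := fun h => by have := hreg v h; omega
      obtain ⟨a, ha, hak⟩ := hnoreg A hA (by
        intro a ha b hab
        -- The neighbourhoods of `a` in `H` and in `isolate H v` have the same size `k`.
        have hsub : (isolate H v).neighborFinset a ⊆ H.neighborFinset a := by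
          intro w hw
          rw [SimpleGraph.mem_neighborFinset] at *
          exact hw.1
        have heq := Finset.eq_of_subset_of_card_le hsub (by
          simp only [SimpleGraph.card_neighborFinset_eq_degree]
          exact (hdeg a).trans (hreg a ha))
        have hb : b ∈ H.neighborFinset a := by rwa [SimpleGraph.mem_neighborFinset]
        rw [← heq, SimpleGraph.mem_neighborFinset] at hb
        exact hcl a ha b hb)
      have := hreg a ha
      have := hle a
      omega) rfl
    have hgv : g v = v := by
      by_contra h
      exact (hg.adj v h).2.1 rfl
    have hgH : IsMatchInv H g := ⟨hg.invol, fun a ha => (hg.adj a ha).1⟩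
    have hcard : (moved g).card + 2 ≤ (moved f).card := by
      have h1 := hf.max g hgH
      have h2 : (moved g).card ≠ (moved f).card := fun h =>
        hv g ⟨hgH, fun g' hg' => h ▸ hf.max g' hg'⟩ hgv
      have h3 := card_moved_eq g hgH.invol
      have h4 := card_moved_eq f hf.isMatch.invol
      omega
    have hsum : ∑ a, H.degree a ≤ ∑ a, (isolate H v).degree a + 2 * k := by
      have hpt : ∀ a, H.degree a ≤ (isolate H v).degree a + ((if H.Adj v a then 1 else 0) +
          (if a = v then k else 0)) := by
        intro a
        by_cases hav : a = v
        · subst hav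
          simpa [hv0] using hdeg a
        · have hsub : H.neighborFinset a ⊆ (isolate H v).neighborFinset a ∪
              (if H.Adj v a then {v} else ∅) := by
            intro w hw
            rw [Finset.mem_union, SimpleGraph.mem_neighborFinset]
            rw [SimpleGraph.mem_neighborFinset] at hw
            by_cases hwv : w = v
            · subst hwv
              right
              simp [hw.symm]
            · exact Or.inl ⟨hw, hav, hwv⟩
          have h1 := (Finset.card_le_card hsub).trans (Finset.card_union_le _ _)
          simp only [SimpleGraph.card_neighborFinset_eq_degree] at h1
          split_ifs at h1 ⊢ <;> simpa using h1
      refine (Finset.sum_le_sum fun a _ => hpt a).trans ?_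
      rw [Finset.sum_add_distrib, Finset.sum_add_distrib]
      have h1 : ∑ a, (if H.Adj v a then 1 else 0) ≤ k := by
        rw [← Finset.card_filter]
        refine le_trans (le_of_eq ?_) (hdeg v)
        rw [← SimpleGraph.card_neighborFinset_eq_degree]
        congr 1
        ext w
        simp
      have h2 : ∑ a, (if a = v then k else 0) = k := by simp
      omega
    refine ⟨f, hf.isMatch, ?_⟩
    have hsumZ : ∑ a, (H.degree a : ℤ) ≤ ∑ a, ((isolate H v).degree a : ℤ) + 2 * k := by
      exact_mod_cast hsum
    have e1 := mul_le_mul_of_nonneg_left hsumZ (show (0 : ℤ) ≤ (k : ℤ) + 2 by positivity)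
    have e2 := mul_le_mul_of_nonneg_left
      (show (((univ.filter fun a => 0 < (isolate H v).degree a).card : ℕ) : ℤ) + 1 ≤ n by omega)
      (show (0 : ℤ) ≤ 2 * ((k : ℤ) - 2) by omega)
    have e3 := mul_le_mul_of_nonneg_left
      (show ((moved g).card : ℤ) + 2 ≤ (moved f).card by omega)
      (show (0 : ℤ) ≤ (k : ℤ) ^ 2 + k + 2 by positivity)
    linarith

end

theorem stmt_2 (k : ℕ) (hk2 : 2 ≤ k) (hkeven : Even k)
    {V : Type*} [Fintype V] (G : SimpleGraph V) [DecidableRel G.Adj]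
    (hdeg : ∀ v, G.degree v ≤ k)
    (hnoreg : ∀ C : G.ConnectedComponent, ¬ ∀ v ∈ C.supp, G.degree v = k) :
    (((k : ℝ) + 2) / ((k : ℝ) ^ 2 + (k : ℝ) + 2)) * (G.edgeSet.ncard : ℝ)
      - (((k : ℝ) - 2) / ((k : ℝ) ^ 2 + (k : ℝ) + 2)) * (Fintype.card V : ℝ)
      ≤ (matchingNumber G : ℝ) := by
  classical
  obtain ⟨f, hf, hb⟩ := exists_matching_bound hk2 hkeven G
    (fun v => by convert hdeg v) (by
      rintro A ⟨a, ha⟩ hcl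
      by_contra! hreg
      refine hnoreg (G.connectedComponentMk a) fun v hv => ?_
      have hva : G.Reachable a v := (SimpleGraph.ConnectedComponent.exact hv).symm
      have hvA : v ∈ A := by
        rw [SimpleGraph.reachable_iff_reflTransGen] at hva
        induction hva with
        | refl => exact ha
        | tail h hbc ih =>
          refine hcl _ (ih ?_) _ hbc
          rw [SimpleGraph.ConnectedComponent.mem_supp_iff, SimpleGraph.ConnectedComponent.eq]
          exact ((SimpleGraph.reachable_iff_reflTransGen _ _).2 h).symm
      refine le_antisymm (hdeg v) ?_
      convert hreg v hvA)
  have hm : ∑ v, (G.degree v : ℤ) = 2 * (G.edgeSet.ncard : ℤ) := by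
    rw [← SimpleGraph.coe_edgeFinset, Set.ncard_coe_finset]
    exact_mod_cast G.sum_degrees_eq_twice_card_edges
  have hb' : ((k : ℤ) + 2) * (2 * (G.edgeSet.ncard : ℤ)) ≤
      2 * ((k : ℤ) - 2) * Fintype.card V + ((k : ℤ) ^ 2 + k + 2) * (2 * matchingNumber G) := by
    rw [← hm]
    refine le_trans (le_of_eq_of_le ?_ hb) (add_le_add ?_ ?_)
    · congr!
    · refine mul_le_mul_of_nonneg_left ?_ (by omega)
      exact_mod_cast Finset.card_le_univ _
    · refine mul_le_mul_of_nonneg_left ?_ (by positivity)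
      exact_mod_cast card_moved_le_matchingNumber hf
  have hb'' : ((k : ℝ) + 2) * (2 * (G.edgeSet.ncard : ℝ)) ≤
      2 * ((k : ℝ) - 2) * Fintype.card V + ((k : ℝ) ^ 2 + k + 2) * (2 * matchingNumber G) := by
    exact_mod_cast hb'
  have hD : (0 : ℝ) < (k : ℝ) ^ 2 + k + 2 := by positivity
  rw [div_mul_eq_mul_div, div_mul_eq_mul_div, ← sub_div, div_le_iff₀ hD]
  linarith
end

section
/- Let k ≥ 4 be an even integer and let G be a finite connected simple graph with n vertices, m edges, and maximum degree at most k. If it is not the case that G is k-regular with n = k+1 or n = k+3, then the matching number satisfies α'(G) ≥ n/(k(k+1)) + m/(k+1) − 1/(k(k+1)). Moreover, if G is k-regular with n = k+1 then α'(G) = (n−1)/2 = n/(k(k+1)) + m/(k+1) − 1/k, and if G is k-regular with n = k+3 then α'(G) = (n−1)/2 = n/(k(k+1)) + m/(k+1) − 3/(k(k+1)). -/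
namespace MatchingBound
open SimpleGraph

/-! ### Matchings and the matching number -/


lemma ncard_verts_eq {V : Type*} [Finite V] {G : SimpleGraph V} {M : G.Subgraph}
    (hM : M.IsMatching) : M.verts.ncard = 2 * M.edgeSet.ncard := by
  classical
  cases nonempty_fintype V
  have h := M.spanningCoe.sum_degrees_eq_twice_card_edges
  have h1 : ∀ v, M.spanningCoe.degree v = if v ∈ M.verts then 1 else 0 := by
    intro v
    rw [Subgraph.degree_spanningCoe]
    split_ifs with hv
    · exact (Subgraph.isMatching_iff_forall_degree.1 hM) v hv
    · rw [Subgraph.degree, Fintype.card_eq_zero_iff]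
      exact ⟨fun w => hv (M.edge_vert w.2)⟩
  simp only [h1, Finset.sum_boole] at h
  rw [Set.ncard_eq_toFinset_card', Set.ncard_eq_toFinset_card']
  convert h using 2
  · simp [Set.toFinset]
  · congr 1
    ext e; simp

/-- The supremum defining `matchingNumber` is taken over a bounded set, hence is not a junk value. -/
lemma bddAbove_matching {V : Type*} [Finite V] (G : SimpleGraph V) :
    BddAbove {n | ∃ M : G.Subgraph, M.IsMatching ∧ M.edgeSet.ncard = n} := by
  refine ⟨Nat.card V, ?_⟩
  rintro _ ⟨M, hM, rfl⟩
  have := ncard_verts_eq hM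
  have := Set.ncard_le_card M.verts
  omega

lemma le_matchingNumber {V : Type*} [Finite V] {G : SimpleGraph V} {M : G.Subgraph}
    (hM : M.IsMatching) : M.verts.ncard ≤ 2 * matchingNumber G := by
  rw [ncard_verts_eq hM]
  exact Nat.mul_le_mul_left _ (le_csSup (bddAbove_matching G) ⟨M, hM, rfl⟩)

lemma two_mul_matchingNumber_le {V : Type*} [Fintype V] (G : SimpleGraph V) :
    2 * matchingNumber G ≤ Fintype.card V := by
  obtain ⟨M, hM, h⟩ := Nat.sSup_mem
    (s := {n | ∃ M : G.Subgraph, M.IsMatching ∧ M.edgeSet.ncard = n})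
    ⟨0, ⊥, by intro v hv; simp at hv, by simp⟩ (bddAbove_matching G)
  have := ncard_verts_eq hM
  have := Set.ncard_le_card M.verts
  rw [Nat.card_eq_fintype_card] at this
  unfold matchingNumber
  omega

/-! ### The Tutte-Berge formula -/

/-- The graph `G` with `r` new vertices, each adjacent to every other vertex, old or new. The
condition on `inl u`, `inl v` is vacuous as soon as one of the endpoints is new. -/
def addUniversal {V : Type*} (G : SimpleGraph V) (r : ℕ) : SimpleGraph (V ⊕ Fin r) where
  Adj x y := x ≠ y ∧ ∀ u v, x = .inl u → y = .inl v → G.Adj u v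
  symm := ⟨fun _ _ h => ⟨h.1.symm, fun u v hu hv => (h.2 v u hv hu).symm⟩⟩
  loopless := ⟨fun _ h => h.1 rfl⟩

/-- A perfect matching of `addUniversal G r`, restricted to `G`, misses only the vertices matched
to new ones, of which there are at most `r`. -/
lemma card_le_of_isPerfectMatching {V : Type*} [Fintype V] {G : SimpleGraph V} {r : ℕ}
    {M' : (addUniversal G r).Subgraph} (hM' : M'.IsPerfectMatching) :
    Fintype.card V ≤ 2 * matchingNumber G + r := by
  classical
  let M : G.Subgraph :=
    { verts := {v | ∃ w, M'.Adj (.inl v) (.inl w)}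
      Adj := fun v w => M'.Adj (.inl v) (.inl w)
      adj_sub := fun {v w} h => h.adj_sub.2 v w rfl rfl
      edge_vert := fun {v w} h => ⟨w, h⟩
      symm := ⟨fun _ _ h => h.symm⟩ }
  have hM : M.IsMatching := by
    rintro v ⟨w, hw⟩
    refine ⟨w, hw, fun y hy => ?_⟩
    exact Sum.inl_injective (hM'.1.eq_of_adj_left hy hw)
  have hex : ∀ v : ↥(M.vertsᶜ), ∃ i : Fin r, M'.Adj (.inl v.1) (.inr i) := by
    rintro ⟨v, hv⟩
    obtain ⟨w, hw, -⟩ := Subgraph.isPerfectMatching_iff.1 hM' (.inl v)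
    rcases w with w | i
    · exact absurd ⟨w, hw⟩ hv
    · exact ⟨i, hw⟩
  choose f hf using hex
  have hinj : Function.Injective f := by
    intro a b hab
    have h2 := hf b
    rw [← hab] at h2
    exact Subtype.ext (Sum.inl_injective (hM'.1.eq_of_adj_right (hf a) h2))
  have h1 := Nat.card_le_card_of_injective f hinj
  rw [Nat.card_coe_set_eq, Nat.card_eq_fintype_card, Fintype.card_fin] at h1
  have h2 := Set.ncard_add_ncard_compl M.verts
  rw [Nat.card_eq_fintype_card] at h2
  have := le_matchingNumber hM
  omega

lemma ncard_oddComponents_le_of_iso {V W : Type*} [Finite W] {G : SimpleGraph V} {H : SimpleGraph W}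
    (φ : G ≃g H) : G.oddComponents.ncard ≤ H.oddComponents.ncard := by
  refine Set.ncard_le_ncard_of_injOn φ.connectedComponentEquiv ?_
    φ.connectedComponentEquiv.injective.injOn (Set.toFinite _)
  intro c hc
  have := Nat.card_congr (ConnectedComponent.isoEquivSupp φ c)
  simp only [Nat.card_coe_set_eq] at this
  simpa [oddComponents, this] using hc

/-- Deleting from `addUniversal G r` a set containing all new vertices leaves the graph obtained
from `G` by deleting the old vertices of that set. -/
def isoDelete {V : Type*} (G : SimpleGraph V) (r : ℕ) (U : Set (V ⊕ Fin r))
    (hU : ∀ i, Sum.inr i ∈ U) :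
    ((⊤ : (addUniversal G r).Subgraph).deleteVerts U).coe ≃g
      G.induce (Sum.inl ⁻¹' U)ᶜ where
  toFun x := match x with
    | ⟨.inl v, hv⟩ => ⟨v, hv.2⟩
    | ⟨.inr i, hi⟩ => absurd (hU i) hi.2
  invFun v := ⟨.inl v.1, trivial, v.2⟩
  left_inv x := by
    rcases x with ⟨v | i, hv⟩
    · rfl
    · exact absurd (hU i) hv.2
  right_inv v := rfl
  map_rel_iff' := by
    rintro ⟨v | i, hv⟩ ⟨w | j, hw⟩
    · constructor
      · intro h
        refine ⟨hv, hw, fun e => G.ne_of_adj h (Sum.inl_injective e), ?_⟩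
        rintro _ _ ⟨⟩ ⟨⟩
        exact h
      · rintro ⟨-, -, h⟩
        exact h.2 v w rfl rfl
    · exact absurd (hU j) hw.2
    · exact absurd (hU i) hv.2
    · exact absurd (hU i) hv.2

lemma oddComponents_ncard_le_one {V : Type*} {G : SimpleGraph V} (h : G.Preconnected) :
    G.oddComponents.ncard ≤ 1 := by
  have := h.subsingleton_connectedComponent
  exact Set.ncard_le_one_of_subsingleton _

/-- The nontrivial inequality of the Tutte-Berge formula. -/
theorem exists_tutteBerge {V : Type*} [Fintype V] (G : SimpleGraph V) :
    ∃ S : Set V, Fintype.card V + S.ncard ≤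
      2 * matchingNumber G + (G.induce Sᶜ).oddComponents.ncard := by
  classical
  have hpar (S : Set V) : (G.induce Sᶜ).oddComponents.ncard % 2 = (Fintype.card V + S.ncard) % 2 := by
    have h1 := odd_ncard_oddComponents (G.induce Sᶜ)
    have h2 := Set.ncard_add_ncard_compl S
    rw [Nat.card_coe_set_eq, Nat.odd_iff, Nat.odd_iff] at h1
    rw [Nat.card_eq_fintype_card] at h2
    omega
  -- By parity, deficiency at most one is accounted for by the components of `G` itself.
  by_cases hd : Fintype.card V ≤ 2 * matchingNumber G + 1
  · refine ⟨∅, ?_⟩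
    have := hpar ∅
    simp only [Set.ncard_empty] at this ⊢
    omega
  obtain ⟨r, hr⟩ := Nat.exists_eq_add_of_le
    (show 2 * matchingNumber G + 2 ≤ Fintype.card V by omega)
  -- One pair of universal vertices too few for a perfect matching, so that Tutte's theorem applies.
  have hno : ¬ ∃ M' : (addUniversal G r).Subgraph, M'.IsPerfectMatching := by
    rintro ⟨M', hM'⟩
    have := card_le_of_isPerfectMatching hM'
    omega
  rw [tutte] at hno
  push Not at hno
  obtain ⟨U, hU⟩ := hno
  unfold IsTutteViolator at hU
  have hcard : Nat.card (V ⊕ Fin r) = Fintype.card V + r := by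
    simp [Nat.card_eq_fintype_card]
  by_cases hall : ∀ i, Sum.inr i ∈ U
  · refine ⟨Sum.inl ⁻¹' U, ?_⟩
    have h1 := ncard_oddComponents_le_of_iso (isoDelete G r U hall)
    have h2 := hpar (Sum.inl ⁻¹' U)
    have h3 : U.ncard = (Sum.inl ⁻¹' U : Set V).ncard + r := by
      have : U = Sum.inl '' (Sum.inl ⁻¹' U) ∪ Set.range (Sum.inr : Fin r → V ⊕ Fin r) := by
        ext (x | x) <;> simp [hall]
      conv_lhs => rw [this]
      rw [Set.ncard_union_eq (by
        rw [Set.disjoint_left]; rintro _ ⟨a, _, rfl⟩ ⟨b, hb⟩; cases hb),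
        Set.ncard_image_of_injective _ Sum.inl_injective, ← Set.image_univ,
        Set.ncard_image_of_injective _ Sum.inr_injective, Set.ncard_univ, Nat.card_eq_fintype_card,
        Fintype.card_fin]
    omega
  -- Otherwise a universal vertex survives, so `U` leaves a connected graph and must be empty; then
  -- the whole graph would be a single odd component, but it has even order.
  · exfalso
    push Not at hall
    obtain ⟨i, hi⟩ := hall
    set H := ((⊤ : (addUniversal G r).Subgraph).deleteVerts U).coe with hH
    have hc : H.Preconnected := by
      have key : ∀ x, H.Reachable x ⟨.inr i, trivial, hi⟩ := by
        intro x
        by_cases hx : x = ⟨.inr i, trivial, hi⟩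
        · rw [hx]
        · refine Adj.reachable ?_
          obtain ⟨x, hx'⟩ := x
          have hxU : x ∉ U := hx'.2
          have : x ≠ .inr i := fun h => hx (Subtype.ext h)
          refine ⟨hx', ⟨trivial, hi⟩, this, ?_⟩
          rintro _ _ - ⟨⟩
      exact fun x y => (key x).trans (key y).symm
    have h1 := oddComponents_ncard_le_one hc
    have h0 : U.ncard = 0 := by omega
    have hUe : U = ∅ := (Set.ncard_eq_zero (Set.toFinite _)).1 h0
    have h2 := odd_ncard_oddComponents H
    have h3 : Nat.card ((⊤ : (addUniversal G r).Subgraph).deleteVerts U).verts = Fintype.card V + r := by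
      rw [← hcard, hUe]
      simp
    rw [h3, Nat.odd_iff, Nat.odd_iff] at h2
    omega

/-! ### Edges inside a vertex set -/

/-- The arithmetic behind `card_add_mul_edgesWithin_le`. For odd `a`, the bound from
`m ≤ a (a - 1) / 2` suffices when `a < k`, the bound from `2 m ≤ k a` when `a ≥ k + 5`, and for
`a = k + 1`, `k + 3` the strict inequality `2 m < k a` is needed. -/
lemma component_bound_aux {k a m : ℕ} (hk4 : 4 ≤ k) (hk : Even k) (ha : 1 ≤ a)
    (h1 : 2 * m ≤ a * (a - 1)) (h2 : 2 * m ≤ k * a)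
    (h3 : 2 * m < k * a ∨ (a ≠ k + 1 ∧ a ≠ k + 3)) :
    a + k * m ≤ k * (k + 1) * (a / 2) + 1 := by
  obtain ⟨l, rfl⟩ := hk
  rcases Nat.even_or_odd' a with ⟨b, rfl | rfl⟩
  · rw [Nat.mul_div_cancel_left _ (by norm_num)]
    nlinarith
  · have hb : (2 * b + 1) / 2 = b := by omega
    rw [hb]
    rw [Nat.add_sub_cancel] at h1
    have h1' : m ≤ (2 * b + 1) * b := by nlinarith
    have h2' : m ≤ l * (2 * b + 1) := by nlinarith
    rcases lt_trichotomy b l with hbl | rfl | hbl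
    · have : (l + l) * m ≤ (l + l) * ((2 * b + 1) * b) := Nat.mul_le_mul_left _ h1'
      obtain ⟨c, rfl⟩ := Nat.exists_eq_add_of_lt hbl
      nlinarith [Nat.zero_le (b * c), Nat.zero_le (b*b), Nat.zero_le (b*b*c), Nat.zero_le (b*c*c)]
    · have h : m + 1 ≤ b * (2 * b + 1) := by
        rcases h3 with h3 | h3
        · nlinarith
        · omega
      have := Nat.mul_le_mul_left (b + b) h
      nlinarith
    · obtain ⟨c, rfl⟩ := Nat.exists_eq_add_of_lt hbl
      rcases Nat.eq_zero_or_pos c with rfl | hc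
      · have h : m + 1 ≤ l * (2 * (l + 0 + 1) + 1) := by
          rcases h3 with h3 | h3
          · nlinarith
          · omega
        have := Nat.mul_le_mul_left (l + l) h
        nlinarith
      · have := Nat.mul_le_mul_left (l + l) h2'
        obtain ⟨d, rfl⟩ := Nat.exists_eq_add_of_lt hc
        obtain ⟨e, rfl⟩ := Nat.exists_eq_add_of_le (show 2 ≤ l by omega)
        nlinarith [Nat.zero_le (d * e)]

open Classical in
/-- The edges of `G` with both endpoints in `T`. -/
noncomputable def edgesWithin {V : Type*} [Fintype V] (G : SimpleGraph V) (T : Finset V) :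
    Finset (Sym2 V) :=
  G.edgeFinset.filter fun e => ∀ v ∈ e, v ∈ T

lemma two_mul_card_edgesWithin {V : Type*} [Fintype V] [DecidableEq V] (G : SimpleGraph V)
    [DecidableRel G.Adj] (T : Finset V) :
    2 * (edgesWithin G T).card = ∑ v ∈ T, (G.neighborFinset v ∩ T).card := by
  classical
  have h := (G.induce (T : Set V)).sum_degrees_eq_twice_card_edges
  have h1 : edgesWithin G T = (G.induce (T : Set V)).edgeFinset.image (Sym2.map Subtype.val) := by
    ext e
    induction e with | _ x y
    simp only [edgesWithin, Finset.mem_filter, mem_edgeFinset, Finset.mem_image, mem_edgeSet]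
    constructor
    · rintro ⟨h, hT⟩
      exact ⟨s(⟨x, hT x (by simp)⟩, ⟨y, hT y (by simp)⟩), by simpa using h, by simp⟩
    · rintro ⟨e, he, hxy⟩
      induction e with | _ a b
      rw [Sym2.map_mk] at hxy
      have hab : G.Adj a b := by simpa using he
      have hm : s(x, y) ∈ G.edgeSet := by rw [← hxy]; exact hab
      refine ⟨hm, ?_⟩
      rw [← hxy]
      intro v hv
      rcases Sym2.mem_iff.1 hv with rfl | rfl
      · exact a.2
      · exact b.2
  rw [h1, Finset.card_image_of_injective _ (Sym2.map.injective Subtype.val_injective), ← h]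
  rw [← Finset.sum_coe_sort T]
  refine Finset.sum_congr rfl fun v _ => ?_
  rw [← card_neighborFinset_eq_degree, ← Finset.card_map (Function.Embedding.subtype _)]
  congr 1
  ext w
  simp

/-- The contribution of one component. The hypothesis `h` excludes exactly the sets `T` of
`k + 1` or `k + 3` vertices on which `G` induces a `k`-regular graph. -/
lemma card_add_mul_edgesWithin_le {V : Type*} [Fintype V] [DecidableEq V] (G : SimpleGraph V)
    [DecidableRel G.Adj] {k : ℕ} (hk4 : 4 ≤ k) (hk : Even k) (hdeg : ∀ v, G.degree v ≤ k)
    (T : Finset V) (hT : T.Nonempty)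
    (h : (∃ v ∈ T, (G.neighborFinset v ∩ T).card < k) ∨ (T.card ≠ k + 1 ∧ T.card ≠ k + 3)) :
    T.card + k * (edgesWithin G T).card ≤ k * (k + 1) * (T.card / 2) + 1 := by
  have hle : ∀ v ∈ T, (G.neighborFinset v ∩ T).card ≤ k := fun v _ =>
    (Finset.card_le_card Finset.inter_subset_left).trans (hdeg v)
  refine component_bound_aux hk4 hk hT.card_pos ?_ ?_ (h.imp_left ?_)
  · rw [two_mul_card_edgesWithin, ← smul_eq_mul]
    refine Finset.sum_le_card_nsmul _ _ _ fun v hv => ?_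
    rw [← Finset.card_erase_of_mem hv]
    refine Finset.card_le_card fun w hw => ?_
    simp only [Finset.mem_inter, mem_neighborFinset] at hw
    exact Finset.mem_erase.2 ⟨hw.1.ne', hw.2⟩
  · rw [two_mul_card_edgesWithin, mul_comm, ← smul_eq_mul]
    exact Finset.sum_le_card_nsmul _ _ _ hle
  · rintro ⟨v, hv, hlt⟩
    rw [two_mul_card_edgesWithin, mul_comm k, ← smul_eq_mul, ← Finset.sum_const]
    exact Finset.sum_lt_sum hle ⟨v, hv, hlt⟩

/-! ### Counting over the components of `G - S` -/

/-- If the fibres of `φ` are contracted, a connected graph on `W` remains; its edges come from `F`,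
and a connected graph has at most one more vertex than edges. -/
lemma card_le_of_contract {V W : Type*} [Finite W] {G : SimpleGraph V} (hG : G.Connected)
    (φ : V → W) (hφ : Function.Surjective φ) (F : Finset (Sym2 V))
    (hF : ∀ u v, G.Adj u v → φ u ≠ φ v → s(u, v) ∈ F) : Nat.card W ≤ F.card + 1 := by
  classical
  have hr : ∀ u v, G.Adj u v → (G.map φ).Reachable (φ u) (φ v) := by
    intro u v h
    by_cases e : φ u = φ v
    · rw [e]
    · exact Adj.reachable ⟨e, u, v, h, rfl, rfl⟩
  have hr' : ∀ u v, G.Walk u v → (G.map φ).Reachable (φ u) (φ v) := by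
    intro u v p
    induction p with
    | nil => exact Reachable.refl _
    | cons h _ ih => exact (hr _ _ h).trans ih
  have hconn : (G.map φ).Connected := by
    have := hG.nonempty.map φ
    refine ⟨fun a b => ?_⟩
    obtain ⟨u, rfl⟩ := hφ a
    obtain ⟨v, rfl⟩ := hφ b
    exact (hG.preconnected u v).elim (hr' u v)
  refine hconn.card_vert_le_card_edgeSet_add_one.trans (Nat.add_le_add_right ?_ 1)
  have hsub : (G.map φ).edgeSet ⊆ ((F.image (Sym2.map φ) : Finset (Sym2 W)) : Set (Sym2 W)) := by
    intro e
    induction e with | _ a b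
    rintro ⟨hne, u, v, h, rfl, rfl⟩
    exact Finset.mem_coe.2 (Finset.mem_image.2 ⟨s(u, v), hF u v h hne, by simp⟩)
  rw [Nat.card_coe_set_eq]
  refine (Set.ncard_le_ncard hsub (Finset.finite_toSet _)).trans ?_
  rw [Set.ncard_coe_finset]
  exact Finset.card_image_le

/-- The two alternatives correspond to `S` empty or nonempty in the Tutte-Berge formula. -/
theorem matching_dichotomy {V : Type*} [Fintype V] (G : SimpleGraph V) [DecidableRel G.Adj]
    {k : ℕ} (hk4 : 4 ≤ k) (hk : Even k) (hconn : G.Connected) (hdeg : ∀ v, G.degree v ≤ k) :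
    Fintype.card V ≤ 2 * matchingNumber G + 1 ∨
    Fintype.card V + k * G.edgeFinset.card ≤ k * (k + 1) * matchingNumber G + 1 := by
  classical
  obtain ⟨S, hS⟩ := exists_tutteBerge G
  rcases S.eq_empty_or_nonempty with rfl | ⟨z, hz⟩
  · left
    have : (G.induce (∅ : Set V)ᶜ).Preconnected := by
      rw [Set.compl_empty]
      exact (induceUnivIso G).symm.connected_iff.1 hconn |>.preconnected
    have := oddComponents_ncard_le_one this
    simp only [Set.ncard_empty] at hS
    omega
  right
  set H := G.induce Sᶜ with hH
  -- `φ` fixes the vertices of `S` and contracts each component of `G - S` to a point.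
  let φ : V → S ⊕ H.ConnectedComponent := fun v =>
    if h : v ∈ S then .inl ⟨v, h⟩ else .inr (H.connectedComponentMk ⟨v, h⟩)
  have φl : ∀ v (h : v ∈ S), φ v = .inl ⟨v, h⟩ := fun v h => dif_pos h
  have φr : ∀ v (h : v ∉ S), φ v = .inr (H.connectedComponentMk ⟨v, h⟩) := fun v h => dif_neg h
  have hφ : Function.Surjective φ := by
    rintro (⟨v, h⟩ | c)
    · exact ⟨v, φl v h⟩
    · induction c using ConnectedComponent.ind with | _ v
      exact ⟨v.1, φr v.1 v.2⟩
  have hadj : ∀ u v, G.Adj u v → u ∉ S → v ∉ S → φ u = φ v := by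
    intro u v h hu hv
    rw [φr u hu, φr v hv]
    congr 1
    exact ConnectedComponent.sound (Adj.reachable (show H.Adj ⟨u, hu⟩ ⟨v, hv⟩ from h))
  set F : Finset (Sym2 V) := G.edgeFinset.filter fun e => ∃ v ∈ e, v ∈ S with hF
  have hcon : S.ncard + Fintype.card H.ConnectedComponent ≤ F.card + 1 := by
    have := card_le_of_contract hconn φ hφ F (by
      intro u v h hne
      rw [hF, Finset.mem_filter]
      refine ⟨by simpa using h, ?_⟩
      by_contra hcon
      push Not at hcon
      exact hne (hadj u v h (hcon u (by simp)) (hcon v (by simp))))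
    rwa [Nat.card_sum, Nat.card_coe_set_eq, Nat.card_eq_fintype_card] at this
  have hFk : F.card ≤ S.ncard * k := by
    rw [Set.ncard_eq_toFinset_card']
    refine (Finset.card_le_card (t := S.toFinset.biUnion fun v => G.incidenceFinset v) ?_).trans
      (Finset.card_biUnion_le_card_mul _ _ _ fun v _ => ?_)
    · intro e he
      obtain ⟨he, v, hv, hvS⟩ := Finset.mem_filter.1 he
      exact Finset.mem_biUnion.2 ⟨v, by simpa using hvS, by
        rw [mem_incidenceFinset]; exact ⟨by simpa using he, hv⟩⟩
    · rw [card_incidenceFinset_eq_degree]; exact hdeg v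
  let C : H.ConnectedComponent → Finset V := fun c => Finset.univ.filter fun v => φ v = .inr c
  have hC : ∀ c v, v ∈ C c ↔ φ v = .inr c := fun c v => by simp [C]
  have hn : Fintype.card V = S.ncard + ∑ c, (C c).card := by
    rw [← Finset.card_univ, Finset.card_eq_sum_card_fiberwise (f := φ) (t := Finset.univ) (by simp),
      Fintype.sum_sum_type]
    congr 1
    rw [Finset.sum_congr rfl (g := fun _ => 1)]
    · simp [Set.ncard_eq_toFinset_card']
    · rintro ⟨v, hv⟩ -
      rw [Finset.card_eq_one]
      refine ⟨v, ?_⟩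
      ext w
      simp only [Finset.mem_filter, Finset.mem_univ, true_and, Finset.mem_singleton]
      constructor
      · intro h
        by_cases hw : w ∈ S
        · rw [φl w hw] at h
          simpa using h
        · rw [φr w hw] at h
          cases h
      · rintro rfl
        exact φl w hv
  have hm : G.edgeFinset.card ≤ F.card + ∑ c, (edgesWithin G (C c)).card := by
    refine (Finset.card_le_card (t := F ∪ Finset.univ.biUnion fun c => edgesWithin G (C c)) ?_).trans
      ((Finset.card_union_le _ _).trans (Nat.add_le_add_left Finset.card_biUnion_le _))
    intro e he
    by_cases h : ∃ v ∈ e, v ∈ S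
    · exact Finset.mem_union_left _ (Finset.mem_filter.2 ⟨he, h⟩)
    · refine Finset.mem_union_right _ ?_
      push Not at h
      induction e with | _ x y
      have hx := h x (by simp)
      have hy := h y (by simp)
      refine Finset.mem_biUnion.2 ⟨H.connectedComponentMk ⟨x, hx⟩, Finset.mem_univ _, ?_⟩
      rw [edgesWithin, Finset.mem_filter]
      refine ⟨by simpa using he, fun v hv => ?_⟩
      rw [hC]
      rcases Sym2.mem_iff.1 hv with rfl | rfl
      · exact φr _ hx
      · rw [← hadj x v (by simpa using he) hx hy]
        exact φr _ hx
  have hsupp : ∀ c : H.ConnectedComponent, c.supp.ncard = (C c).card := by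
    intro c
    rw [← Set.ncard_coe_finset, ← Set.ncard_image_of_injective _ Subtype.val_injective]
    congr 1
    ext v
    simp only [Set.mem_image, Finset.mem_coe, hC]
    constructor
    · rintro ⟨w, hw, rfl⟩
      rw [φr w.1 w.2]
      exact congrArg _ hw
    · intro h
      by_cases hv : v ∈ S
      · rw [φl v hv] at h
        cases h
      · rw [φr v hv] at h
        exact ⟨⟨v, hv⟩, Sum.inr_injective h, rfl⟩
  have hodd : ∑ c, (C c).card = 2 * ∑ c, (C c).card / 2 + H.oddComponents.ncard := by
    have : H.oddComponents.ncard = ∑ c, (C c).card % 2 := by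
      have hset : H.oddComponents =
          ((Finset.univ.filter fun c => Odd c.supp.ncard : Finset H.ConnectedComponent) :
            Set H.ConnectedComponent) := by
        ext c
        simp
      rw [hset, Set.ncard_coe_finset, Finset.card_filter]
      refine Finset.sum_congr rfl fun c _ => ?_
      simp only [hsupp, Nat.odd_iff]
      split_ifs <;> omega
    rw [this, Finset.mul_sum, ← Finset.sum_add_distrib]
    exact Finset.sum_congr rfl fun c _ => (Nat.div_add_mod _ _).symm
  have hcomp : ∀ c, (C c).card + k * (edgesWithin G (C c)).card ≤ k * (k + 1) * ((C c).card / 2) + 1 := by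
    intro c
    obtain ⟨v, hv⟩ := hφ (.inr c)
    have hvC : v ∈ C c := (hC c v).2 hv
    refine card_add_mul_edgesWithin_le G hk4 hk hdeg _ ⟨v, hvC⟩ (.inl ?_)
    -- A walk from the component to `S` leaves the component, at a vertex of deficient inner degree.
    obtain ⟨p⟩ := hconn.preconnected v z
    obtain ⟨⟨⟨a, b⟩, hab⟩, -, ha, hb⟩ := p.exists_boundary_dart (C c : Set V) hvC (by
      rw [Finset.mem_coe, hC, φl z hz]
      simp)
    refine ⟨a, ha, (Finset.card_lt_card ?_).trans_le (hdeg a)⟩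
    refine (Finset.ssubset_iff_of_subset Finset.inter_subset_left).2 ⟨b, by simpa using hab, ?_⟩
    exact fun h => hb (Finset.mem_inter.1 h).2
  have hsum : ∑ c, (C c).card + k * ∑ c, (edgesWithin G (C c)).card ≤
      k * (k + 1) * ∑ c, (C c).card / 2 + Fintype.card H.ConnectedComponent := by
    have := Finset.sum_le_sum fun c (_ : c ∈ Finset.univ) => hcomp c
    simpa [Finset.sum_add_distrib, Finset.mul_sum] using this
  have hα : S.ncard + ∑ c, (C c).card / 2 ≤ matchingNumber G := by omega
  have e1 := Nat.mul_le_mul_left k hm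
  have e2 := Nat.mul_le_mul_left (k + 1) hFk
  have e3 := Nat.mul_le_mul_left (k * (k + 1)) hα
  rw [hn]
  nlinarith
end MatchingBound

open MatchingBound SimpleGraph

/-! ### The bound -/

theorem stmt_4 (k : ℕ) (hk4 : 4 ≤ k) (hkeven : Even k)
    {V : Type*} [Fintype V] (G : SimpleGraph V) [DecidableRel G.Adj]
    (hconn : G.Connected) (hdeg : ∀ v, G.degree v ≤ k) :
    (¬ (G.IsRegularOfDegree k ∧ (Fintype.card V = k + 1 ∨ Fintype.card V = k + 3)) →
      (Fintype.card V : ℝ) / ((k : ℝ) * ((k : ℝ) + 1)) + (G.edgeSet.ncard : ℝ) / ((k : ℝ) + 1)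
        - 1 / ((k : ℝ) * ((k : ℝ) + 1)) ≤ (matchingNumber G : ℝ)) ∧
    (G.IsRegularOfDegree k → Fintype.card V = k + 1 →
      (matchingNumber G : ℝ) = ((Fintype.card V : ℝ) - 1) / 2 ∧
      ((Fintype.card V : ℝ) - 1) / 2 =
        (Fintype.card V : ℝ) / ((k : ℝ) * ((k : ℝ) + 1)) + (G.edgeSet.ncard : ℝ) / ((k : ℝ) + 1)
          - 1 / (k : ℝ)) ∧
    (G.IsRegularOfDegree k → Fintype.card V = k + 3 →
      (matchingNumber G : ℝ) = ((Fintype.card V : ℝ) - 1) / 2 ∧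
      ((Fintype.card V : ℝ) - 1) / 2 =
        (Fintype.card V : ℝ) / ((k : ℝ) * ((k : ℝ) + 1)) + (G.edgeSet.ncard : ℝ) / ((k : ℝ) + 1)
          - 3 / ((k : ℝ) * ((k : ℝ) + 1))) := by
  classical
  have hedge : G.edgeSet.ncard = G.edgeFinset.card := by
    rw [Set.ncard_eq_toFinset_card']; rfl
  have hupper := two_mul_matchingNumber_le G
  have hdich := matching_dichotomy G hk4 hkeven hconn hdeg
  rw [hedge]
  have hk0 : (0 : ℝ) < k := by exact_mod_cast (by omega : 0 < k)
  have hreg (hr : G.IsRegularOfDegree k) : 2 * G.edgeFinset.card = Fintype.card V * k := by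
    rw [← G.sum_degrees_eq_twice_card_edges, Finset.sum_congr rfl fun v _ => hr v]
    simp
  refine ⟨fun hne => ?_, fun hr hn => ?_, fun hr hn => ?_⟩
  · have hmain : Fintype.card V + k * G.edgeFinset.card ≤ k * (k + 1) * matchingNumber G + 1 := by
      rcases hdich with h | h
      · have hb := card_add_mul_edgesWithin_le G hk4 hkeven hdeg Finset.univ
          (Finset.univ_nonempty_iff.2 hconn.nonempty) (by
            by_contra hcon
            push Not at hcon
            obtain ⟨h1, h2⟩ := hcon
            refine hne ⟨fun v => le_antisymm (hdeg v) ?_, ?_⟩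
            · simpa using h1 v (Finset.mem_univ v)
            · by_contra h3
              push Not at h3
              exact h3.2 (h2 h3.1))
        have hi : edgesWithin G Finset.univ = G.edgeFinset := by
          ext e
          simp [edgesWithin]
        rw [hi, Finset.card_univ] at hb
        have : Fintype.card V / 2 ≤ matchingNumber G := by omega
        exact hb.trans (Nat.add_le_add_right (Nat.mul_le_mul_left _ this) 1)
      · exact h
    have hR : (Fintype.card V : ℝ) + k * G.edgeFinset.card ≤ k * (k + 1) * matchingNumber G + 1 := by
      exact_mod_cast hmain
    rw [← sub_nonneg]
    have : (matchingNumber G : ℝ) - ((Fintype.card V : ℝ) / (k * (k + 1)) +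
        (G.edgeFinset.card : ℝ) / (k + 1) - 1 / (k * (k + 1))) =
        (k * (k + 1) * matchingNumber G + 1 - (Fintype.card V + k * G.edgeFinset.card)) /
          (k * (k + 1)) := by
      field_simp
      ring
    rw [this]
    exact div_nonneg (by linarith) (by positivity)
  · have hm := hreg hr
    rw [hn] at hm hdich hupper ⊢
    obtain ⟨l, rfl⟩ := hkeven
    have hα : matchingNumber G = l := by
      have : l ≤ matchingNumber G := by
        rcases hdich with h | h
        · omega
        · by_contra! hlt
          have := Nat.mul_le_mul_left ((l + l) * (l + l + 1)) (Nat.succ_le_of_lt hlt)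
          nlinarith
      omega
    have hmR : (2 : ℝ) * G.edgeFinset.card = (l + l + 1) * (l + l) := by exact_mod_cast hm
    have hm' : (G.edgeFinset.card : ℝ) = (l + l + 1) * l := by linarith
    rw [hα, hm']
    have hl0 : (0 : ℝ) < l := by
      push_cast at hk0
      linarith
    push_cast
    have h2l : (l : ℝ) + l = 2 * l := by ring
    rw [h2l]
    constructor
    · ring
    · field_simp
      ring
  · have hm := hreg hr
    rw [hn] at hm hdich hupper ⊢
    obtain ⟨l, rfl⟩ := hkeven
    have hα : matchingNumber G = l + 1 := by
      have : l + 1 ≤ matchingNumber G := by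
        rcases hdich with h | h
        · omega
        · by_contra! hlt
          have := Nat.mul_le_mul_left ((l + l) * (l + l + 1)) (Nat.lt_succ_iff.1 hlt)
          nlinarith
      omega
    have hmR : (2 : ℝ) * G.edgeFinset.card = (l + l + 3) * (l + l) := by exact_mod_cast hm
    have hm' : (G.edgeFinset.card : ℝ) = (l + l + 3) * l := by linarith
    rw [hα, hm']
    have hl0 : (0 : ℝ) < l := by
      push_cast at hk0
      linarith
    push_cast
    have h2l : (l : ℝ) + l = 2 * l := by ring
    rw [h2l]
    constructor
    · ring
    · field_simp
      ring
end
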